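/- Let α be a linear order and let p₁ ≤ q₁ < p₂ ≤ q₂ < p₃ ≤ q₃ < p₄ ≤ q₄ be elements of α. Let h₁, h₂, h₃, h₄ be permutations of α such that hᵢ fixes every point of α lying outside the closed interval [pᵢ, qᵢ] (for i = 1, 2, 3, 4), and let g be an order automorphism of α. Then, in the permutation group of α, the commutator [[g⁻¹h₁g, h₄], [g⁻¹h₂g, h₃]] equals the identity, where [a,b] = a⁻¹b⁻¹ab and g is regarded as a permutation of α. -/

import Mathlib

/-- The commutator `[a, b] = a⁻¹ b⁻¹ a b`. -/
def commWord {G : Type*} [Group G] (a b : G) : G := a⁻¹ * b⁻¹ * a * b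

/-!
The conjugate of `hᵢ` by `g` is supported on the preimage `Jᵢ` under `g` of the interval `Iᵢ`
supporting `hᵢ`. A point `x ∈ J₁ ∩ I₄` and a point `y ∈ J₂ ∩ I₃` would satisfy `y ≤ x`, because `I₃`
lies below `I₄`, and `g x < g y`, because `I₁` lies below `I₂`; a monotone `g` allows no such pair.
So `J₁ ∩ I₄` or `J₂ ∩ I₃` is empty, and the corresponding inner commutator is already trivial.
-/

section Commutator

variable {G : Type*} [Group G]

open scoped commutatorElement in
theorem commWord_eq_one_iff_commute {a b : G} : commWord a b = 1 ↔ Commute a b := by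
  have commWord_eq : commWord a b = ⁅a⁻¹, b⁻¹⁆ := by
    simp only [commWord, commutatorElement_def, inv_inv]
  rw [commWord_eq, commutatorElement_eq_one_iff_commute, Commute.inv_inv_iff]

theorem commWord_one_left (b : G) : commWord 1 b = 1 :=
  commWord_eq_one_iff_commute.2 (Commute.one_left b)

theorem commWord_one_right (a : G) : commWord a 1 = 1 :=
  commWord_eq_one_iff_commute.2 (Commute.one_right a)

end Commutator

/-- The permutation `h` is supported on `S`: it fixes every point outside `S`. The set `S` may be
larger than the set of points moved by `h`. -/
def IsSupportedOn {α : Type*} (h : Equiv.Perm α) (S : Set α) : Prop :=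
  ∀ x, x ∉ S → h x = x

namespace IsSupportedOn

variable {α : Type*} {h k : Equiv.Perm α} {S T : Set α}

theorem conj (hS : IsSupportedOn h S) (e : Equiv.Perm α) :
    IsSupportedOn (e⁻¹ * h * e) (e ⁻¹' S) := by
  intro x hx
  calc (e⁻¹ * h * e) x = e⁻¹ (h (e x)) := rfl
    _ = e⁻¹ (e x) := by rw [hS (e x) hx]
    _ = x := e.symm_apply_apply x

theorem commute (hS : IsSupportedOn h S) (kT : IsSupportedOn k T) (hST : Disjoint S T) :
    Commute h k := by
  refine Equiv.Perm.Disjoint.commute fun x => ?_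
  by_cases hx : x ∈ S
  · exact Or.inr (kT x (hST.notMem_of_mem_left hx))
  · exact Or.inl (hS x hx)

theorem commWord_conj_eq_one (hS : IsSupportedOn h S) (kT : IsSupportedOn k T)
    (e : Equiv.Perm α) (hST : Disjoint (e ⁻¹' S) T) : commWord (e⁻¹ * h * e) k = 1 :=
  commWord_eq_one_iff_commute.2 ((hS.conj e).commute kT hST)

end IsSupportedOn

theorem lt_of_mem_Icc_of_mem_Icc {α : Type*} [Preorder α] {p q r s x y : α} (hqr : q < r)
    (hx : x ∈ Set.Icc p q) (hy : y ∈ Set.Icc r s) : x < y :=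
  hx.2.trans_lt (hqr.trans_le hy.1)

theorem disjoint_preimage_or_disjoint_preimage_of_monotone {α β : Type*} [Preorder α] [Preorder β]
    {f : α → β} (hf : Monotone f) {S₁ S₂ : Set β} {S₃ S₄ : Set α}
    (h₁₂ : ∀ x ∈ S₁, ∀ y ∈ S₂, x < y) (h₃₄ : ∀ x ∈ S₃, ∀ y ∈ S₄, x ≤ y) :
    Disjoint (f ⁻¹' S₁) S₄ ∨ Disjoint (f ⁻¹' S₂) S₃ := by
  by_contra! hmeet
  obtain ⟨x, hx₁, hx₄⟩ := Set.not_disjoint_iff.1 hmeet.1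
  obtain ⟨y, hy₂, hy₃⟩ := Set.not_disjoint_iff.1 hmeet.2
  have hfxy : f x < f y := h₁₂ (f x) hx₁ (f y) hy₂
  have hfyx : f y ≤ f x := hf (h₃₄ y hy₃ x hx₄)
  exact hfxy.not_ge hfyx

theorem stmt5_general {α : Type*} [Preorder α] {S₁ S₂ S₃ S₄ : Set α}
    (h₁₂ : ∀ x ∈ S₁, ∀ y ∈ S₂, x < y) (h₃₄ : ∀ x ∈ S₃, ∀ y ∈ S₄, x ≤ y)
    {h₁ h₂ h₃ h₄ : Equiv.Perm α}
    (hs₁ : IsSupportedOn h₁ S₁) (hs₂ : IsSupportedOn h₂ S₂)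
    (hs₃ : IsSupportedOn h₃ S₃) (hs₄ : IsSupportedOn h₄ S₄)
    {g : Equiv.Perm α} (hg : Monotone g) :
    commWord (commWord (g⁻¹ * h₁ * g) h₄) (commWord (g⁻¹ * h₂ * g) h₃) = 1 := by
  rcases disjoint_preimage_or_disjoint_preimage_of_monotone hg h₁₂ h₃₄ with h₁₄ | h₂₃
  · rw [hs₁.commWord_conj_eq_one hs₄ g h₁₄, commWord_one_left]
  · rw [hs₂.commWord_conj_eq_one hs₃ g h₂₃, commWord_one_right]

/-- The law with constants in Thompson's group `F`, in its general order-theoretic form: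
for permutations `h₁, h₂, h₃, h₄` supported on four successive closed intervals of a linear
order `α` and any order automorphism `g` of `α`, the commutator
`[[g⁻¹h₁g, h₄], [g⁻¹h₂g, h₃]]` is the identity permutation. -/
theorem stmt5 (α : Type*) [LinearOrder α]
    (p₁ q₁ p₂ q₂ p₃ q₃ p₄ q₄ : α)
    (h₁₁ : p₁ ≤ q₁) (h₁₂ : q₁ < p₂) (h₂₂ : p₂ ≤ q₂) (h₂₃ : q₂ < p₃)
    (h₃₃ : p₃ ≤ q₃) (h₃₄ : q₃ < p₄) (h₄₄ : p₄ ≤ q₄)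
    (h₁ h₂ h₃ h₄ : Equiv.Perm α)
    (hs₁ : ∀ x : α, x ∉ Set.Icc p₁ q₁ → h₁ x = x)
    (hs₂ : ∀ x : α, x ∉ Set.Icc p₂ q₂ → h₂ x = x)
    (hs₃ : ∀ x : α, x ∉ Set.Icc p₃ q₃ → h₃ x = x)
    (hs₄ : ∀ x : α, x ∉ Set.Icc p₄ q₄ → h₄ x = x)
    (g : α ≃o α) :
    commWord (commWord ((g.toEquiv)⁻¹ * h₁ * g.toEquiv) h₄)
      (commWord ((g.toEquiv)⁻¹ * h₂ * g.toEquiv) h₃) = 1 :=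
  stmt5_general (fun _ hx _ hy => lt_of_mem_Icc_of_mem_Icc h₁₂ hx hy)
    (fun _ hx _ hy => (lt_of_mem_Icc_of_mem_Icc h₃₄ hx hy).le) hs₁ hs₂ hs₃ hs₄ g.monotone
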